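/- Let d ≥ 1, let g ∈ C_b^∞(ℝ^d), and let B₁, B₂ be bounded subsets of 𝒢(ℝ^d). Then the family {π₁ *_{g,0} π₂ : π₁ ∈ B₁, π₂ ∈ B₂} is a bounded subset of 𝓗(ℝ^d): for every (s,t) ∈ 𝒯₁ and π₁ ∈ B₁, π₂ ∈ B₂ the function (x,y) ↦ (π₁ *_{g,0} π₂)(s,t,x,y) is infinitely differentiable, and for each pair of multi-indices α, β ∈ ℕ^d there exist constants c₁ ≥ 0 and c₂ > 0, independent of π₁ ∈ B₁ and π₂ ∈ B₂, such that for all (s,t) ∈ 𝒯₁ and x, y ∈ ℝ^d one has both |∂_x^α ∂_y^β (π₁ *_{g,0} π₂)(s,t,x,y)| ≤ c₁ t^{−(|α|+|β|+d)/2} exp(−c₂‖x−y‖²/t) and |∂_x^α(x ↦ (π₁ *_{g,0} π₂)(s,t,x,x+y√t))(x)| ≤ c₁ t^{−d/2} exp(−c₂‖y‖²). -/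

import Mathlib

open MeasureTheory Real

noncomputable section

/-- `ℝ^d` with the Euclidean norm. -/
abbrev Eu (d : ℕ) := EuclideanSpace ℝ (Fin d)

/-- Iterated partial derivative along a list of coordinate directions. -/
noncomputable def pderivs {d : ℕ} : List (Fin d) → (Eu d → ℝ) → Eu d → ℝ
  | [], f => f
  | i :: l, f => pderivs l fun x => fderiv ℝ f x (EuclideanSpace.single i 1)

/-- The list of coordinates (with multiplicities) associated to a multi-index `m : ℕ^d`. -/
def mToList {d : ℕ} (m : Fin d → ℕ) : List (Fin d) :=
  (List.finRange d).flatMap fun i => List.replicate (m i) i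

/-- The partial derivative `∂^m` associated to a multi-index `m : ℕ^d`. -/
noncomputable def pderivM {d : ℕ} (m : Fin d → ℕ) (f : Eu d → ℝ) : Eu d → ℝ :=
  pderivs (mToList m) f

/-- The length `|m| = m₁ + ⋯ + m_d` of a multi-index. -/
def mlen {d : ℕ} (m : Fin d → ℕ) : ℕ := ∑ i, m i

/-- Mixed partial derivative `∂_x^α ∂_y^β f(x,y)` of a function of two `ℝ^d` variables. -/
noncomputable def D2 {d : ℕ} (α β : Fin d → ℕ) (f : Eu d → Eu d → ℝ) (x y : Eu d) : ℝ :=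
  pderivM α (fun x' => pderivM β (f x') y) x

/-- The space convolution `(π₁ *_{g,0} π₂)(s,t,x,y) = ∫ g(z) π₁(s,x,z) π₂(t-s,z,y) dz`. -/
noncomputable def convG0 {d : ℕ} (g : Eu d → ℝ)
    (P₁ P₂ : ℝ → Eu d → Eu d → ℝ) (s t : ℝ) (x y : Eu d) : ℝ :=
  ∫ z : Eu d, g z * (P₁ s x z * P₂ (t - s) z y)

open scoped ContDiff

section aux
variable {E : Type} [NormedAddCommGroup E] [NormedSpace ℝ E]

theorem paramInt {W : Type} [NormedAddCommGroup W] [NormedSpace ℝ W]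
    [MeasurableSpace W] [BorelSpace W] [SecondCountableTopology W] (μ : Measure W) (n : ℕ) :
    ∀ (V : Type) [NormedAddCommGroup V] [NormedSpace ℝ V] [CompleteSpace V]
    (F : E → W → V) (_ : ContDiff ℝ ∞ (fun q : E × W => F q.1 q.2)) (b : ℕ → W → ℝ)
    (_ : ∀ k, Integrable (b k) μ)
    (_ : ∀ k p w, ‖iteratedFDeriv ℝ k (fun p => F p w) p‖ ≤ b k w),
    ContDiff ℝ n (fun p => ∫ w, F p w ∂μ) ∧
    ∀ p, ‖iteratedFDeriv ℝ n (fun p => ∫ w, F p w ∂μ) p‖ ≤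
      ∫ w, ‖iteratedFDeriv ℝ n (fun p => F p w) p‖ ∂μ := by
  induction n with
  | zero =>
    intro V _ _ _ F hF b hb hbd
    have hc : Continuous (fun q : E × W => F q.1 q.2) := hF.continuous
    constructor
    · simp only [CharP.cast_eq_zero, contDiff_zero]
      refine continuous_of_dominated (bound := b 0) ?_ ?_ (hb 0) ?_
      · intro p
        exact (hc.comp (by fun_prop : Continuous fun w : W => (p, w))).aestronglyMeasurable
      · intro p
        exact Filter.Eventually.of_forall fun w => by simpa using hbd 0 p w
      · exact Filter.Eventually.of_forall fun w =>
          (hc.comp (by fun_prop : Continuous fun p : E => (p, w)))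
    · intro p
      simp only [norm_iteratedFDeriv_zero]
      exact norm_integral_le_integral_norm _
  | succ n ih =>
    intro V _ _ _ F hF b hb hbd
    have hc : Continuous (fun q : E × W => F q.1 q.2) := hF.continuous
    have hF' : ContDiff ℝ ∞ (fun q : E × W => fderiv ℝ (fun p => F p q.2) q.1) := by
      refine ContDiff.fderiv (m := ∞) (n := ∞) (f := fun q : E × W => fun p => F p q.2) (g := fun q => q.1)
        ?_ contDiff_fst (by simp)
      exact hF.comp (by fun_prop : ContDiff ℝ ∞ fun r : (E × W) × E => (r.2, r.1.2))
    have hc' := hF'.continuous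
    have hsm : ∀ w, ContDiff ℝ ∞ (fun p => F p w) := fun w =>
      hF.comp (by fun_prop : ContDiff ℝ ∞ fun p : E => (p, w))
    have key : ∀ p, HasFDerivAt (fun p => ∫ w, F p w ∂μ)
        (∫ w, fderiv ℝ (fun p => F p w) p ∂μ) p := by
      intro p
      have hm : ∀ p, AEStronglyMeasurable (F p) μ := fun p =>
        (hc.comp (by fun_prop : Continuous fun w : W => (p, w))).aestronglyMeasurable
      refine hasFDerivAt_integral_of_dominated_of_fderiv_le (bound := b 1) (s := Set.univ)
        (F' := fun p w => fderiv ℝ (fun p => F p w) p) Filter.univ_mem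
        (Filter.Eventually.of_forall hm) ?_ ?_ ?_ (hb 1) ?_
      · refine (hb 0).mono' (hm p) (Filter.Eventually.of_forall fun w => by simpa using hbd 0 p w)
      · exact (hc'.comp (by fun_prop : Continuous fun w : W => (p, w))).aestronglyMeasurable
      · exact Filter.Eventually.of_forall fun w p _ => by
          have := hbd 1 p w
          rwa [← norm_iteratedFDeriv_fderiv, norm_iteratedFDeriv_zero] at this
      · exact Filter.Eventually.of_forall fun w p _ =>
          ((hsm w).differentiable (by simp)).differentiableAt.hasFDerivAt
    have hfd : fderiv ℝ (fun p => ∫ w, F p w ∂μ) =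
        fun p => ∫ w, fderiv ℝ (fun p => F p w) p ∂μ := funext fun p => (key p).fderiv
    obtain ⟨h1, h2⟩ := ih (E →L[ℝ] V) (fun p w => fderiv ℝ (fun p => F p w) p) hF'
      (fun k => b (k+1)) (fun k => hb (k+1)) (fun k p w => by
        have := hbd (k+1) p w
        rwa [← norm_iteratedFDeriv_fderiv] at this)
    constructor
    · rw [Nat.cast_add, Nat.cast_one, contDiff_succ_iff_fderiv]
      refine ⟨fun p => (key p).differentiableAt, by simp, ?_⟩
      rw [hfd]; exact h1
    · intro p
      rw [← norm_iteratedFDeriv_fderiv, hfd]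
      refine (h2 p).trans (le_of_eq ?_)
      congr 1; ext w
      rw [← norm_iteratedFDeriv_fderiv]

/-- iterated directional derivatives -/
def pd : List E → (E → ℝ) → E → ℝ
  | [], f => f
  | v :: l, f => pd l fun x => fderiv ℝ f x v

theorem contDiff_dir {f : E → ℝ} (hf : ContDiff ℝ ∞ f) (v : E) :
    ContDiff ℝ ∞ fun x => fderiv ℝ f x v :=
  (hf.fderiv_right (m := ∞) (by simp)).clm_apply contDiff_const

theorem contDiff_pd (L : List E) : ∀ {f : E → ℝ}, ContDiff ℝ ∞ f → ContDiff ℝ ∞ (pd L f) := by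
  induction L with
  | nil => intro f hf; exact hf
  | cons v l ih => intro f hf; exact ih (contDiff_dir hf v)

theorem pd_append (L L' : List E) : ∀ (f : E → ℝ), pd (L ++ L') f = pd L' (pd L f) := by
  induction L with
  | nil => intro f; rfl
  | cons v l ih => intro f; exact ih _

theorem pd_perm {L L' : List E} (h : L.Perm L') :
    ∀ {f : E → ℝ}, ContDiff ℝ ∞ f → pd L f = pd L' f := by
  induction h with
  | nil => intro f _; rfl
  | cons v _ ih => intro f hf; exact ih (contDiff_dir hf v)
  | swap v w l =>
    intro f hf
    change pd l _ = pd l _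
    congr 1; ext x
    have hd : DifferentiableAt ℝ (fderiv ℝ f) x :=
      ((hf.fderiv_right (m := ∞) (by simp)).differentiable (by simp)).differentiableAt
    have hs : IsSymmSndFDerivAt ℝ f x := hf.contDiffAt.isSymmSndFDerivAt
      (by rw [minSmoothness_of_isRCLikeNormedField]; exact WithTop.coe_le_coe.2 (le_top : (2 : ℕ∞) ≤ ⊤))
    rw [fderiv_clm_apply hd (differentiableAt_const _), fderiv_clm_apply hd (differentiableAt_const _)]
    simpa using hs v w
  | trans _ _ ih1 ih2 => intro f hf; rw [ih1 hf, ih2 hf]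

theorem pd_comp {E' : Type} [NormedAddCommGroup E'] [NormedSpace ℝ E'] (A : E' →L[ℝ] E) (c : E)
    (L : List E') : ∀ {f : E → ℝ}, ContDiff ℝ ∞ f → ∀ p,
    pd L (fun q => f (A q + c)) p = pd (L.map A) f (A p + c) := by
  induction L with
  | nil => intro f _ p; rfl
  | cons v l ih =>
    intro f hf p
    change pd l _ p = pd (l.map A) _ _
    rw [← ih (contDiff_dir hf (A v))]
    congr 1; ext q
    have h1 : HasFDerivAt (fun q => A q + c) A q := A.hasFDerivAt.add_const c
    have h2 : HasFDerivAt f (fderiv ℝ f (A q + c)) (A q + c) :=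
      (hf.differentiable (by simp)).differentiableAt.hasFDerivAt
    have := (h2.comp q h1).fderiv
    simp only [Function.comp_def] at this
    rw [this]; rfl

theorem abs_pd_le (L : List E) (hL : ∀ v ∈ L, ‖v‖ ≤ 1) : ∀ {f : E → ℝ}, ContDiff ℝ ∞ f → ∀ p,
    |pd L f p| ≤ ‖iteratedFDeriv ℝ L.length f p‖ := by
  induction L with
  | nil => intro f _ p; simp [pd]
  | cons v l ih =>
    intro f hf p
    refine (ih (fun v hv => hL v (by simp [hv])) (contDiff_dir hf v) p).trans ?_
    refine (norm_iteratedFDeriv_clm_apply_const (N := ∞)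
      (hf.fderiv_right (m := ∞) (by simp)).contDiffAt (by exact_mod_cast le_top)).trans ?_
    rw [norm_iteratedFDeriv_fderiv]
    exact mul_le_of_le_one_left (norm_nonneg _) (hL v (by simp))

theorem iteratedFDeriv_le_pd {ι : Type} [Fintype ι] (b : Module.Basis ι ℝ E) [FiniteDimensional ℝ E]:
    ∃ K : ℝ, 0 ≤ K ∧ ∀ (n : ℕ) (f : E → ℝ), ContDiff ℝ ∞ f → ∀ (p : E) (M : ℝ),
      (∀ l : List ι, l.length = n → |pd (l.map b) f p| ≤ M) →
      ‖iteratedFDeriv ℝ n f p‖ ≤ K ^ n * M := by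
  let φ : ι → E →L[ℝ] ℝ := fun i => LinearMap.toContinuousLinearMap (b.coord i)
  let S : ι → ℝ →L[ℝ] (E →L[ℝ] ℝ) := fun i => (ContinuousLinearMap.id ℝ ℝ).smulRight (φ i)
  refine ⟨∑ i, ‖S i‖, Finset.sum_nonneg fun i _ => norm_nonneg (S i), ?_⟩
  intro n
  induction n with
  | zero =>
    intro f hf p M hM
    simpa [pd] using hM [] rfl
  | succ n ih =>
    intro f hf p M hM
    rw [← norm_iteratedFDeriv_fderiv]
    have hrep : fderiv ℝ f = fun x => ∑ i, (S i ∘ fun x => fderiv ℝ f x (b i)) x := by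
      ext x v
      have h1 : fderiv ℝ f x v = fderiv ℝ f x (∑ i, b.repr v i • b i) := by rw [b.sum_repr]
      rw [h1, map_sum]
      simp [S, φ, mul_comm]
    have hcd : ∀ i, ContDiff ℝ ∞ (S i ∘ fun x => fderiv ℝ f x (b i)) := fun i =>
      (S i).contDiff.comp (contDiff_dir hf (b i))
    rw [hrep, iteratedFDeriv_sum (fun i _ => (hcd i).of_le (by exact_mod_cast le_top))]
    rw [Finset.sum_apply]
    refine (norm_sum_le _ _).trans ?_
    have : ∀ i, ‖iteratedFDeriv ℝ n (S i ∘ fun x => fderiv ℝ f x (b i)) p‖ ≤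
        ‖S i‖ * ((∑ i, ‖S i‖) ^ n * M) := by
      intro i
      refine ((S i).norm_iteratedFDeriv_comp_left (N := ∞) (contDiff_dir hf (b i)).contDiffAt
        (by exact_mod_cast le_top)).trans ?_
      gcongr
      refine ih _ (contDiff_dir hf (b i)) p M fun l hl => ?_
      exact hM (i :: l) (by simp [hl])
    refine (Finset.sum_le_sum fun i _ => this i).trans (le_of_eq ?_)
    rw [← Finset.sum_mul, pow_succ]; ring

theorem iteratedFDeriv_mul_le {f h : E → ℝ} (hf : ContDiff ℝ ∞ f) (hh : ContDiff ℝ ∞ h) (p : E)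
    (n : ℕ) (A B : ℝ) (hA : ∀ k ≤ n, ‖iteratedFDeriv ℝ k f p‖ ≤ A)
    (hB : ∀ k ≤ n, ‖iteratedFDeriv ℝ k h p‖ ≤ B) :
    ∀ k ≤ n, ‖iteratedFDeriv ℝ k (fun x => f x * h x) p‖ ≤ 2 ^ n * (A * B) := by
  intro k hk
  have hA0 : 0 ≤ A := (norm_nonneg _).trans (hA 0 (by simp))
  have hB0 : 0 ≤ B := (norm_nonneg _).trans (hB 0 (by simp))
  refine (norm_iteratedFDeriv_mul_le hf hh p (by exact_mod_cast le_top)).trans ?_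
  have : ∀ i ∈ Finset.range (k+1), (k.choose i : ℝ) * ‖iteratedFDeriv ℝ i f p‖ *
      ‖iteratedFDeriv ℝ (k - i) h p‖ ≤ (k.choose i : ℝ) * (A * B) := by
    intro i hi
    rw [mul_assoc]
    have hi' : i ≤ n := by have := Finset.mem_range.1 hi; omega
    have := hA i hi'
    have := hB (k - i) (by omega)
    gcongr
  refine (Finset.sum_le_sum this).trans ?_
  rw [← Finset.sum_mul]
  gcongr
  have := Nat.sum_range_choose k
  calc (∑ i ∈ Finset.range (k+1), (k.choose i : ℝ)) = 2 ^ k := by exact_mod_cast this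
    _ ≤ 2 ^ n := pow_le_pow_right₀ (by norm_num) hk

end aux

section conv
variable {d : ℕ}

theorem pderivs_eq (l : List (Fin d)) : ∀ f : Eu d → ℝ,
    pderivs l f = pd (l.map fun i => EuclideanSpace.single i (1 : ℝ)) f := by
  induction l with
  | nil => intro f; rfl
  | cons i l ih => intro f; exact ih _

theorem mToList_length (m : Fin d → ℕ) : (mToList m).length = mlen m := by
  simp [mToList, mlen, List.length_flatMap, ← List.ofFn_eq_map, List.sum_ofFn]

theorem count_mToList (m : Fin d → ℕ) (i : Fin d) : (mToList m).count i = m i := by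
  simp [mToList, List.count_flatMap, Function.comp_def, List.count_replicate,
    ← List.ofFn_eq_map, List.sum_ofFn]

theorem perm_mToList (l : List (Fin d)) : (mToList fun i => l.count i).Perm l := by
  rw [List.perm_iff_count]
  intro i
  rw [count_mToList]

theorem single_norm_le (i : Fin d) : ‖(EuclideanSpace.single i (1 : ℝ) : Eu d)‖ ≤ 1 := by
  simp

theorem pderivM_le (m : Fin d → ℕ) {f : Eu d → ℝ} (hf : ContDiff ℝ ∞ f) (x : Eu d) :
    |pderivM m f x| ≤ ‖iteratedFDeriv ℝ (mlen m) f x‖ := by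
  rw [pderivM, pderivs_eq]
  refine (abs_pd_le _ ?_ hf x).trans (le_of_eq ?_)
  · intro v hv
    obtain ⟨i, _, rfl⟩ := List.mem_map.1 hv
    exact single_norm_le i
  · rw [List.length_map, mToList_length]

theorem le_pderivM (d : ℕ) : ∃ K : ℝ, 0 ≤ K ∧ ∀ (n : ℕ) (f : Eu d → ℝ), ContDiff ℝ ∞ f →
    ∀ (x : Eu d) (M : ℝ), (∀ m : Fin d → ℕ, mlen m = n → |pderivM m f x| ≤ M) →
      ‖iteratedFDeriv ℝ n f x‖ ≤ K ^ n * M := by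
  obtain ⟨K, hK, h⟩ := iteratedFDeriv_le_pd (EuclideanSpace.basisFun (Fin d) ℝ).toBasis
  refine ⟨K, hK, fun n f hf x M hM => h n f hf x M fun l hl => ?_⟩
  have := hM (fun i => l.count i) (by rw [← mToList_length, (perm_mToList l).length_eq, hl])
  rw [pderivM, pderivs_eq, pd_perm ((perm_mToList l).map _) hf] at this
  convert this using 5
  ext i
  simp

theorem pd_inl {G : Eu d × Eu d → ℝ} (hG : ContDiff ℝ ∞ G) (L : List (Eu d)) (x y : Eu d) :
    pd (L.map fun v => (v, (0 : Eu d))) G (x, y) = pd L (fun q => G (q, y)) x := by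
  have := (pd_comp (ContinuousLinearMap.inl ℝ (Eu d) (Eu d)) (0, y) L hG x).symm
  simp only [ContinuousLinearMap.inl_apply, Prod.mk_add_mk, add_zero, zero_add] at this
  exact this

theorem pd_inr {G : Eu d × Eu d → ℝ} (hG : ContDiff ℝ ∞ G) (L : List (Eu d)) (x y : Eu d) :
    pd (L.map fun v => ((0 : Eu d), v)) G (x, y) = pd L (fun q => G (x, q)) y := by
  have := (pd_comp (ContinuousLinearMap.inr ℝ (Eu d) (Eu d)) (x, 0) L hG y).symm
  simp only [ContinuousLinearMap.inr_apply, Prod.mk_add_mk, add_zero, zero_add] at this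
  exact this

theorem D2_eq (α β : Fin d → ℕ) {f : Eu d → Eu d → ℝ}
    (hf : ContDiff ℝ ∞ fun p : Eu d × Eu d => f p.1 p.2) (x y : Eu d) :
    D2 α β f x y = pd (((mToList β).map fun i => ((0 : Eu d), EuclideanSpace.single i (1 : ℝ))) ++
      (mToList α).map fun i => (EuclideanSpace.single i (1 : ℝ), (0 : Eu d)))
      (fun p : Eu d × Eu d => f p.1 p.2) (x, y) := by
  rw [pd_append]
  have h1 := pd_inl (contDiff_pd ((mToList β).map fun i =>
    ((0 : Eu d), EuclideanSpace.single i (1 : ℝ))) hf)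
    ((mToList α).map fun i => EuclideanSpace.single i (1 : ℝ)) x y
  rw [List.map_map] at h1
  simp only [Function.comp_def] at h1
  rw [h1, D2, pderivM, pderivs_eq]
  congr 1; ext x'
  have h2 := pd_inr hf ((mToList β).map fun i => EuclideanSpace.single i (1 : ℝ)) x' y
  rw [List.map_map] at h2
  simp only [Function.comp_def] at h2
  rw [h2, pderivM, pderivs_eq]

theorem D2_le (α β : Fin d → ℕ) {f : Eu d → Eu d → ℝ}
    (hf : ContDiff ℝ ∞ fun p : Eu d × Eu d => f p.1 p.2) (x y : Eu d) :
    |D2 α β f x y| ≤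
      ‖iteratedFDeriv ℝ (mlen α + mlen β) (fun p : Eu d × Eu d => f p.1 p.2) (x, y)‖ := by
  rw [D2_eq α β hf]
  refine (abs_pd_le _ ?_ hf (x, y)).trans (le_of_eq ?_)
  · intro v hv
    rcases List.mem_append.1 hv with hv | hv <;> obtain ⟨i, _, rfl⟩ := List.mem_map.1 hv <;>
    simp [Prod.norm_def]
  · rw [List.length_append, List.length_map, List.length_map, mToList_length, mToList_length,
      add_comm]

theorem perm_sum (l : List (Fin d ⊕ Fin d)) : ∃ α β : Fin d → ℕ,
    ((mToList β).map Sum.inr ++ (mToList α).map Sum.inl).Perm l := by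
  have h : ∃ l₁ l₂ : List (Fin d), (l₂.map Sum.inr ++ l₁.map Sum.inl).Perm l := by
    induction l with
    | nil => exact ⟨[], [], by simp⟩
    | cons a l ih =>
      obtain ⟨l₁, l₂, h⟩ := ih
      rcases a with i | i
      · refine ⟨i :: l₁, l₂, ?_⟩
        rw [List.map_cons]
        exact List.perm_middle.trans (h.cons _)
      · exact ⟨l₁, i :: l₂, h.cons _⟩
  obtain ⟨l₁, l₂, h⟩ := h
  exact ⟨_, _, (((perm_mToList l₂).map _).append ((perm_mToList l₁).map _)).trans h⟩

theorem le_D2 (d : ℕ) : ∃ K : ℝ, 0 ≤ K ∧ ∀ (n : ℕ) (f : Eu d → Eu d → ℝ),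
    ContDiff ℝ ∞ (fun p : Eu d × Eu d => f p.1 p.2) →
    ∀ (x y : Eu d) (M : ℝ), (∀ α β : Fin d → ℕ, mlen α + mlen β = n → |D2 α β f x y| ≤ M) →
      ‖iteratedFDeriv ℝ n (fun p : Eu d × Eu d => f p.1 p.2) (x, y)‖ ≤ K ^ n * M := by
  let b := (EuclideanSpace.basisFun (Fin d) ℝ).toBasis
  obtain ⟨K, hK, h⟩ := iteratedFDeriv_le_pd (b.prod b)
  refine ⟨K, hK, fun n f hf x y M hM => h n _ hf (x, y) M fun l hl => ?_⟩
  obtain ⟨α, β, hp⟩ := perm_sum l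
  have hlen := hp.length_eq
  rw [List.length_append, List.length_map, List.length_map, mToList_length, mToList_length,
    add_comm] at hlen
  have := hM α β (hlen.trans hl)
  rw [D2_eq _ _ hf] at this
  rw [← pd_perm (hp.map _) hf, List.map_append, List.map_map, List.map_map]
  convert this using 6 <;>
  · ext i <;> simp [b]

theorem gather {κ : Type} [Finite κ] (Q : κ → ℝ → ℝ → Prop)
    (hmono : ∀ k c₁ c₁' c₂ c₂', 0 ≤ c₁ → c₁ ≤ c₁' → c₂' ≤ c₂ → Q k c₁ c₂ → Q k c₁' c₂')
    (h : ∀ k, ∃ c₁ ≥ (0:ℝ), ∃ c₂ > (0:ℝ), Q k c₁ c₂) :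
    ∃ c₁ ≥ (0:ℝ), ∃ c₂ > (0:ℝ), ∀ k, Q k c₁ c₂ := by
  have := Fintype.ofFinite κ
  choose a ha b hb hQ using h
  have hs : 0 ≤ ∑ k, (b k)⁻¹ := Finset.sum_nonneg fun k _ => (inv_pos.2 (hb k)).le
  refine ⟨∑ k, a k, Finset.sum_nonneg fun k _ => ha k, (1 + ∑ k, (b k)⁻¹)⁻¹,
    by positivity, fun k => hmono k _ _ _ _ (ha k) ?_ ?_ (hQ k)⟩
  · exact Finset.single_le_sum (f := a) (fun k _ => ha k) (Finset.mem_univ k)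
  · have : (b k)⁻¹ ≤ ∑ k, (b k)⁻¹ :=
      Finset.single_le_sum (f := fun k => (b k)⁻¹) (fun k _ => (inv_pos.2 (hb k)).le)
        (Finset.mem_univ k)
    exact inv_le_of_inv_le₀ (hb k) (by linarith)

theorem finite_mlen (d n : ℕ) : Finite {m : Fin d → ℕ // mlen m ≤ n} := by
  refine Set.Finite.subset (Set.finite_Iic (fun _ : Fin d => n)) ?_
  intro m hm i
  exact (Finset.single_le_sum (f := m) (fun _ _ => Nat.zero_le _) (Finset.mem_univ i)).trans hm

theorem gaussInt {c : ℝ} (hc : 0 < c) :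
    ∫ w : Eu d, exp (-c * ‖w‖ ^ 2) = (π / c) ^ ((d : ℝ) / 2) := by
  have := GaussianFourier.integral_rexp_neg_mul_sq_norm (V := Eu d) hc
  simpa using this

theorem gauss_integrable {c : ℝ} (hc : 0 < c) :
    Integrable fun w : Eu d => exp (-c * ‖w‖ ^ 2) := by
  apply Integrable.of_integral_ne_zero
  rw [gaussInt hc]
  positivity

theorem gauss_conv {c a b : ℝ} (hc : 0 < c) (ha : 0 < a) (hb : 0 < b) (u : Eu d) :
    ∫ w : Eu d, (a ^ (-(d:ℝ)/2) * exp (-c * ‖u - w‖ ^ 2 / a)) *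
      (b ^ (-(d:ℝ)/2) * exp (-c * ‖w‖ ^ 2 / b)) =
    (π / c) ^ ((d:ℝ)/2) * ((a + b) ^ (-(d:ℝ)/2) * exp (-c * ‖u‖ ^ 2 / (a + b))) := by
  have hab : 0 < a + b := by positivity
  set k := c * (a + b) / (a * b) with hk
  have hk0 : 0 < k := by positivity
  have h1 : ∀ w : Eu d, (a ^ (-(d:ℝ)/2) * exp (-c * ‖u - w‖ ^ 2 / a)) *
      (b ^ (-(d:ℝ)/2) * exp (-c * ‖w‖ ^ 2 / b)) =
      (a ^ (-(d:ℝ)/2) * b ^ (-(d:ℝ)/2) * exp (-c * ‖u‖ ^ 2 / (a + b))) *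
        exp (-k * ‖w - (b / (a + b)) • u‖ ^ 2) := by
    intro w
    have : exp (-c * ‖u - w‖ ^ 2 / a) * exp (-c * ‖w‖ ^ 2 / b) =
        exp (-c * ‖u‖ ^ 2 / (a + b)) * exp (-k * ‖w - (b / (a + b)) • u‖ ^ 2) := by
      rw [← exp_add, ← exp_add]
      congr 1
      rw [norm_sub_sq_real, norm_sub_sq_real, inner_smul_right, norm_smul, real_inner_comm,
        mul_pow, Real.norm_eq_abs, sq_abs, hk]
      field_simp
      ring
    linear_combination (a ^ (-(d:ℝ)/2) * b ^ (-(d:ℝ)/2)) * this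
  simp_rw [h1]
  rw [integral_const_mul, integral_sub_right_eq_self (fun w : Eu d => exp (-k * ‖w‖ ^ 2)),
    gaussInt hk0]
  have h2 : (π / k) ^ ((d:ℝ)/2) = (π / c) ^ ((d:ℝ)/2) * (a + b) ^ (-(d:ℝ)/2) *
      (a ^ ((d:ℝ)/2) * b ^ ((d:ℝ)/2)) := by
    rw [neg_div, rpow_neg hab.le, ← inv_rpow hab.le, ← mul_rpow ha.le hb.le,
      ← mul_rpow (by positivity) (by positivity), ← mul_rpow (by positivity) (by positivity)]
    congr 1
    rw [hk]; field_simp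
  rw [h2, neg_div, rpow_neg ha.le, rpow_neg hb.le]
  have : a ^ ((d:ℝ)/2) ≠ 0 := by positivity
  have : b ^ ((d:ℝ)/2) ≠ 0 := by positivity
  field_simp

end conv

section main
variable {d : ℕ}

theorem norm_comp_le {E E' : Type} [NormedAddCommGroup E] [NormedSpace ℝ E]
    [NormedAddCommGroup E'] [NormedSpace ℝ E'] (A : E' →L[ℝ] E) (hA : ‖A‖ ≤ 1)
    {f : E → ℝ} (hf : ContDiff ℝ ∞ f) (k : ℕ) (p : E') :
    ‖iteratedFDeriv ℝ k (fun q => f (A q)) p‖ ≤ ‖iteratedFDeriv ℝ k f (A p)‖ := by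
  have := A.iteratedFDeriv_comp_right hf p (i := k) (by exact_mod_cast le_top)
  simp only [Function.comp_def] at this
  rw [this]
  refine (ContinuousMultilinearMap.norm_compContinuousLinearMap_le _ _).trans ?_
  refine mul_le_of_le_one_right (norm_nonneg _) ?_
  exact Finset.prod_le_one (fun _ _ => norm_nonneg _) fun _ _ => hA

/-- uniform bound for all derivatives of `g` up to order `n`. -/
theorem keyg {g : Eu d → ℝ} (hg : ContDiff ℝ ∞ g)
    (hgb : ∀ γ : Fin d → ℕ, ∃ C : ℝ, ∀ x, |pderivM γ g x| ≤ C) (n : ℕ) :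
    ∃ G ≥ (0:ℝ), ∀ k ≤ n, ∀ x, ‖iteratedFDeriv ℝ k g x‖ ≤ G := by
  have := finite_mlen d n
  obtain ⟨c, hc, _, _, h⟩ := gather (κ := {m : Fin d → ℕ // mlen m ≤ n})
    (fun m c _ => ∀ x, |pderivM m.1 g x| ≤ c)
    (fun m c₁ c₁' _ _ _ h _ hq x => (hq x).trans h)
    (fun m => by
      obtain ⟨C, hC⟩ := hgb m.1
      exact ⟨C, (abs_nonneg _).trans (hC 0), 1, one_pos, hC⟩)
  obtain ⟨K, hK, h2⟩ := le_pderivM d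
  refine ⟨(1 + K) ^ n * c, by positivity, fun k hk x => ?_⟩
  refine (h2 k g hg x c fun m hm => h ⟨m, hm.le.trans hk⟩ x).trans ?_
  gcongr
  calc K ^ k ≤ (1 + K) ^ k := by gcongr; linarith
    _ ≤ _ := pow_le_pow_right₀ (by linarith) hk

theorem keyB (B : Set (ℝ → Eu d → Eu d → ℝ))
    (hsmooth : ∀ P ∈ B, ∀ t ∈ Set.Ioc (0:ℝ) 1,
      ContDiff ℝ (⊤ : ℕ∞) fun p : Eu d × Eu d => P t p.1 p.2)
    (hG : ∀ α β : Fin d → ℕ, ∃ c₁ ≥ (0:ℝ), ∃ c₂ > (0:ℝ), ∀ P ∈ B,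
      ∀ t ∈ Set.Ioc (0:ℝ) 1, ∀ x y : Eu d,
        |D2 α β (P t) x y| ≤ c₁ * t ^ (-((mlen α + mlen β + d : ℕ) : ℝ) / 2) *
            Real.exp (-c₂ * ‖x - y‖ ^ 2 / t) ∧
        |pderivM α (fun x' => P t x' (x' + Real.sqrt t • y)) x| ≤
          c₁ * t ^ (-(d : ℝ) / 2) * Real.exp (-c₂ * ‖y‖ ^ 2)) (n : ℕ) :
    ∃ c₁ ≥ (0:ℝ), ∃ c₂ > (0:ℝ), ∀ P ∈ B, ∀ t ∈ Set.Ioc (0:ℝ) 1, ∀ k ≤ n,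
      (∀ x y, ‖iteratedFDeriv ℝ k (fun p : Eu d × Eu d => P t p.1 p.2) (x, y)‖ ≤
        c₁ * t ^ (-(n : ℝ) / 2) * (t ^ (-(d : ℝ) / 2) * exp (-c₂ * ‖x - y‖ ^ 2 / t))) ∧
      (∀ u v x, ‖iteratedFDeriv ℝ k (fun x : Eu d => P t (x + u) (x + v)) x‖ ≤
        c₁ * (t ^ (-(d : ℝ) / 2) * exp (-c₂ * ‖v - u‖ ^ 2 / t))) := by
  have := finite_mlen d n
  obtain ⟨c₁, hc₁, c₂, hc₂, h⟩ := gather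
    (κ := {m : Fin d → ℕ // mlen m ≤ n} × {m : Fin d → ℕ // mlen m ≤ n})
    (fun m c₁ c₂ => ∀ P ∈ B,
      ∀ t ∈ Set.Ioc (0:ℝ) 1, ∀ x y : Eu d,
        |D2 m.1.1 m.2.1 (P t) x y| ≤ c₁ * t ^ (-((mlen m.1.1 + mlen m.2.1 + d : ℕ) : ℝ) / 2) *
            Real.exp (-c₂ * ‖x - y‖ ^ 2 / t) ∧
        |pderivM m.1.1 (fun x' => P t x' (x' + Real.sqrt t • y)) x| ≤
          c₁ * t ^ (-(d : ℝ) / 2) * Real.exp (-c₂ * ‖y‖ ^ 2))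
    (by
      intro m a a' b b' ha haa hbb hq P hP t ht x y
      have ht0 := ht.1
      obtain ⟨h1, h2⟩ := hq P hP t ht x y
      have ha' := ha.trans haa
      refine ⟨h1.trans ?_, h2.trans ?_⟩ <;> gcongr)
    (fun m => hG m.1.1 m.2.1)
  obtain ⟨K, hK, hKb⟩ := le_pderivM d
  obtain ⟨L, hL, hLb⟩ := le_D2 d
  refine ⟨((1 + K) ^ n + (1 + L) ^ n) * c₁, by positivity, c₂, hc₂, ?_⟩
  intro P hP t ht k hk
  have ht0 := ht.1
  have hs := hsmooth P hP t ht
  have hpow : ∀ K : ℝ, 0 ≤ K → K ^ k ≤ (1 + K) ^ n := fun K hK =>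
    calc K ^ k ≤ (1 + K) ^ k := by gcongr; linarith
      _ ≤ _ := pow_le_pow_right₀ (by linarith) hk
  constructor
  · intro x y
    refine (hLb k (P t) hs x y (c₁ * t ^ (-(n : ℝ) / 2) *
      (t ^ (-(d : ℝ) / 2) * exp (-c₂ * ‖x - y‖ ^ 2 / t))) ?_).trans ?_
    · intro α β hαβ
      refine (h (⟨α, by omega⟩, ⟨β, by omega⟩) P hP t ht x y).1.trans ?_
      rw [← mul_assoc, mul_assoc c₁ _ (t ^ _), ← rpow_add ht0]
      refine mul_le_mul_of_nonneg_right (mul_le_mul_of_nonneg_left ?_ hc₁) (exp_pos _).le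
      apply rpow_le_rpow_of_exponent_ge ht0 ht.2
      simp only [hαβ]
      push_cast
      have : (k : ℝ) ≤ n := by exact_mod_cast hk
      linarith
    · rw [mul_assoc _ c₁, mul_assoc _ (c₁ * _), mul_assoc c₁]
      gcongr
      exact (hpow L hL).trans (by have : 0 ≤ (1 + K) ^ n := by positivity
                                  linarith)
  · intro u v x
    set y : Eu d := (√t)⁻¹ • (v - u) with hy
    have hst : 0 < √t := sqrt_pos.2 ht0
    have hsy : √t • y = v - u := by rw [hy, smul_inv_smul₀ hst.ne']
    have hny : ‖y‖ ^ 2 = ‖v - u‖ ^ 2 / t := by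
      rw [hy, norm_smul, mul_pow, norm_inv, inv_pow, Real.norm_eq_abs, sq_abs, sq_sqrt ht0.le]
      field_simp
    have hf : ContDiff ℝ ∞ (fun x' => P t x' (x' + √t • y)) :=
      hs.comp (by fun_prop : ContDiff ℝ ∞ fun x' : Eu d => (x', x' + √t • y))
    have heq : (fun x : Eu d => P t (x + u) (x + v)) =
        fun x => (fun x' => P t x' (x' + √t • y)) (x + u) := by
      ext x
      simp only [hsy]
      congr 1; abel
    rw [heq, iteratedFDeriv_comp_add_right (f := fun x' => P t x' (x' + √t • y))]
    refine (hKb k _ hf (x + u) (c₁ * (t ^ (-(d : ℝ) / 2) * exp (-c₂ * ‖v - u‖ ^ 2 / t))) ?_).trans ?_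
    · intro α hα
      refine (h (⟨α, by omega⟩, ⟨α, by omega⟩) P hP t ht (x + u) y).2.trans (le_of_eq ?_)
      rw [hny, mul_assoc, mul_div_assoc]
    · rw [mul_assoc _ c₁]
      gcongr
      exact (hpow K hK).trans (by have : 0 ≤ (1 + L) ^ n := by positivity
                                  linarith)

def Bd {E : Type} [NormedAddCommGroup E] [NormedSpace ℝ E] (f₁ f₂ f₃ : E → Eu d → ℝ)
    (a b : ℝ) (U : E → Eu d) (n : ℕ) (c G C₂ C₃ : ℝ) : Prop :=
  0 < c ∧ ∀ p w, ∀ k ≤ n, ‖iteratedFDeriv ℝ k (fun p => f₁ p w) p‖ ≤ G ∧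
    ‖iteratedFDeriv ℝ k (fun p => f₂ p w) p‖ ≤
      C₂ * (a ^ (-(d:ℝ)/2) * exp (-c * ‖U p - w‖ ^ 2 / a)) ∧
    ‖iteratedFDeriv ℝ k (fun p => f₃ p w) p‖ ≤
      C₃ * (b ^ (-(d:ℝ)/2) * exp (-c * ‖w‖ ^ 2 / b))

theorem master {E : Type} [NormedAddCommGroup E] [NormedSpace ℝ E] {f₁ f₂ f₃ : E → Eu d → ℝ}
    {a b : ℝ} (ha : 0 < a) (hb : 0 < b) {U : E → Eu d}
    (h₁ : ContDiff ℝ ∞ fun q : E × Eu d => f₁ q.1 q.2)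
    (h₂ : ContDiff ℝ ∞ fun q : E × Eu d => f₂ q.1 q.2)
    (h₃ : ContDiff ℝ ∞ fun q : E × Eu d => f₃ q.1 q.2)
    (hbd : ∀ n, ∃ c G C₂ C₃, Bd f₁ f₂ f₃ a b U n c G C₂ C₃) :
    ContDiff ℝ ∞ (fun p => ∫ w, f₁ p w * (f₂ p w * f₃ p w)) ∧
    ∀ n c G C₂ C₃, Bd f₁ f₂ f₃ a b U n c G C₂ C₃ → ∀ p,
      ‖iteratedFDeriv ℝ n (fun p => ∫ w, f₁ p w * (f₂ p w * f₃ p w)) p‖ ≤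
        2 ^ n * (2 ^ n * (G * (C₂ * C₃))) * ((π / c) ^ ((d:ℝ)/2) *
          ((a + b) ^ (-(d:ℝ)/2) * exp (-c * ‖U p‖ ^ 2 / (a + b)))) := by
  have hsl : ∀ {f : E → Eu d → ℝ}, (ContDiff ℝ ∞ fun q : E × Eu d => f q.1 q.2) → ∀ w,
      ContDiff ℝ ∞ fun p => f p w := fun hf w =>
    hf.comp (by fun_prop : ContDiff ℝ ∞ fun p : E => (p, w))
  -- pointwise bound
  have pt : ∀ n c G C₂ C₃, Bd f₁ f₂ f₃ a b U n c G C₂ C₃ → ∀ p w, 0 ≤ G * (C₂ * C₃) ∧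
      ‖iteratedFDeriv ℝ n (fun p => f₁ p w * (f₂ p w * f₃ p w)) p‖ ≤
        2 ^ n * (2 ^ n * (G * (C₂ * C₃))) * ((a ^ (-(d:ℝ)/2) * exp (-c * ‖U p - w‖ ^ 2 / a)) *
          (b ^ (-(d:ℝ)/2) * exp (-c * ‖w‖ ^ 2 / b))) := by
    intro n c G C₂ C₃ ⟨hc, h⟩ p w
    constructor
    · obtain ⟨g1, g2, g3⟩ := h p w 0 (Nat.zero_le _)
      have g1' := (norm_nonneg _).trans g1
      have g2' := nonneg_of_mul_nonneg_left ((norm_nonneg _).trans g2) (by positivity)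
      have g3' := nonneg_of_mul_nonneg_left ((norm_nonneg _).trans g3) (by positivity)
      positivity
    · have i1 := iteratedFDeriv_mul_le (hsl h₂ w) (hsl h₃ w) p n _ _
        (fun k hk => (h p w k hk).2.1) (fun k hk => (h p w k hk).2.2)
      have i2 := iteratedFDeriv_mul_le (hsl h₁ w) ((hsl h₂ w).mul (hsl h₃ w)) p n _ _
        (fun k hk => (h p w k hk).1) i1 n le_rfl
      refine i2.trans (le_of_eq ?_)
      ring
  choose c G C₂ C₃ hB using hbd
  have hP := fun n => paramInt (E := E) (volume : Measure (Eu d)) n ℝ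
    (fun p w => f₁ p w * (f₂ p w * f₃ p w)) (h₁.mul (h₂.mul h₃))
    (fun k w => 2 ^ k * (2 ^ k * (G k * (C₂ k * C₃ k))) * ((a ^ (-(d:ℝ)/2) * 1) *
          (b ^ (-(d:ℝ)/2) * exp (-(c k / b) * ‖w‖ ^ 2))))
    (fun k => by
      have := (hB k).1
      have h0 : 0 < c k / b := by positivity
      exact (((gauss_integrable h0).const_mul _).const_mul _).const_mul _)
    (fun k p w => by
      obtain ⟨hn, h⟩ := pt k _ _ _ _ (hB k) p w
      refine h.trans ?_
      have h0 := (hB k).1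
      have e1 : exp (-c k * ‖U p - w‖ ^ 2 / a) ≤ 1 := by
        rw [exp_le_one_iff, neg_mul, neg_div, neg_nonpos]
        positivity
      have e2 : -c k * ‖w‖ ^ 2 / b = -(c k / b) * ‖w‖ ^ 2 := by ring
      rw [e2]
      gcongr)
  constructor
  · rw [contDiff_infty]
    exact fun n => (hP n).1
  · intro n c G C₂ C₃ hBd p
    refine ((hP n).2 p).trans ?_
    rw [← gauss_conv hBd.1 ha hb (U p), ← integral_const_mul]
    refine integral_mono_of_nonneg (Filter.Eventually.of_forall fun w => norm_nonneg _) ?_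
      (Filter.Eventually.of_forall fun w => (pt n c G C₂ C₃ hBd p w).2)
    refine Integrable.const_mul ?_ _
    apply Integrable.of_integral_ne_zero
    rw [gauss_conv hBd.1 ha hb (U p)]
    have := hBd.1
    have : 0 < a + b := by positivity
    positivity

end main

section final
variable {d : ℕ}

def KB (Φ : Eu d → Eu d → ℝ) (t : ℝ) (n : ℕ) (c₁ c₂ : ℝ) : Prop :=
  ∀ k ≤ n,
      (∀ x y, ‖iteratedFDeriv ℝ k (fun p : Eu d × Eu d => Φ p.1 p.2) (x, y)‖ ≤
        c₁ * t ^ (-(n : ℝ) / 2) * (t ^ (-(d : ℝ) / 2) * exp (-c₂ * ‖x - y‖ ^ 2 / t))) ∧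
      (∀ u v x, ‖iteratedFDeriv ℝ k (fun x : Eu d => Φ (x + u) (x + v)) x‖ ≤
        c₁ * (t ^ (-(d : ℝ) / 2) * exp (-c₂ * ‖v - u‖ ^ 2 / t)))

variable {g : Eu d → ℝ} {Φ Ψ : Eu d → Eu d → ℝ} {a b c₁ c₂ G : ℝ} {n : ℕ}

theorem gb (hGb : ∀ k ≤ n, ∀ x, ‖iteratedFDeriv ℝ k g x‖ ≤ G) (w : Eu d) :
    ∀ k ≤ n, ∀ x, ‖iteratedFDeriv ℝ k (fun x => g (x + w)) x‖ ≤ G := by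
  intro k hk x
  rw [iteratedFDeriv_comp_add_right]
  exact hGb k hk _

theorem bd1 (hg : ContDiff ℝ ∞ g)
    (hΨs : ContDiff ℝ ∞ fun p : Eu d × Eu d => Ψ p.1 p.2)
    (hGb : ∀ k ≤ n, ∀ x, ‖iteratedFDeriv ℝ k g x‖ ≤ G) (hc : 0 < c₂)
    (hΦ : KB Φ a n c₁ c₂) (hΨ : KB Ψ b n c₁ c₂) :
    Bd (fun (p : Eu d × Eu d) w => g (p.2 + w)) (fun p w => Φ p.1 (p.2 + w))
      (fun p w => Ψ (p.2 + w) p.2) a b (fun p => p.1 - p.2) n c₂ G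
      (c₁ * a ^ (-(n : ℝ) / 2)) c₁ := by
  refine ⟨hc, fun p w k hk => ⟨?_, ?_, ?_⟩⟩
  · refine (norm_comp_le (ContinuousLinearMap.snd ℝ (Eu d) (Eu d))
      (ContinuousLinearMap.norm_snd_le ..) (f := fun x => g (x + w))
      (hg.comp (by fun_prop)) k p).trans ?_
    exact gb hGb w k hk _
  · have h1 := (hΦ k hk).1 p.1 (p.2 + w)
    have h2 := iteratedFDeriv_comp_add_right (𝕜 := ℝ) (f := fun p : Eu d × Eu d => Φ p.1 p.2)
      k (0, w) p
    have h3 : p + ((0 : Eu d), w) = (p.1, p.2 + w) := by ext <;> simp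
    simp only [Prod.fst_add, Prod.snd_add, add_zero] at h2
    rw [h2, h3]
    rwa [← sub_sub] at h1
  · refine (norm_comp_le (ContinuousLinearMap.snd ℝ (Eu d) (Eu d))
      (ContinuousLinearMap.norm_snd_le ..) (f := fun x => Ψ (x + w) x)
      (hΨs.comp (by fun_prop : ContDiff ℝ ∞ fun x : Eu d => (x + w, x))) k p).trans ?_
    have := (hΨ k hk).2 w 0 p.2
    simpa using this

theorem bd2 (hg : ContDiff ℝ ∞ g)
    (hΦs : ContDiff ℝ ∞ fun p : Eu d × Eu d => Φ p.1 p.2)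
    (hGb : ∀ k ≤ n, ∀ x, ‖iteratedFDeriv ℝ k g x‖ ≤ G) (hc : 0 < c₂)
    (hΦ : KB Φ a n c₁ c₂) (hΨ : KB Ψ b n c₁ c₂) :
    Bd (fun (p : Eu d × Eu d) w => g (p.1 + w)) (fun p w => Ψ (p.1 + w) p.2)
      (fun p w => Φ p.1 (p.1 + w)) b a (fun p => p.2 - p.1) n c₂ G
      (c₁ * b ^ (-(n : ℝ) / 2)) c₁ := by
  refine ⟨hc, fun p w k hk => ⟨?_, ?_, ?_⟩⟩
  · refine (norm_comp_le (ContinuousLinearMap.fst ℝ (Eu d) (Eu d))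
      (ContinuousLinearMap.norm_fst_le ..) (f := fun x => g (x + w))
      (hg.comp (by fun_prop)) k p).trans ?_
    exact gb hGb w k hk _
  · have h1 := (hΨ k hk).1 (p.1 + w) p.2
    have h2 := iteratedFDeriv_comp_add_right (𝕜 := ℝ) (f := fun p : Eu d × Eu d => Ψ p.1 p.2)
      k (w, 0) p
    have h3 : p + (w, (0 : Eu d)) = (p.1 + w, p.2) := by ext <;> simp
    simp only [Prod.fst_add, Prod.snd_add, add_zero] at h2
    rw [h2, h3]
    rwa [norm_sub_rev, ← sub_sub] at h1
  · refine (norm_comp_le (ContinuousLinearMap.fst ℝ (Eu d) (Eu d))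
      (ContinuousLinearMap.norm_fst_le ..) (f := fun x => Φ x (x + w))
      (hΦs.comp (by fun_prop : ContDiff ℝ ∞ fun x : Eu d => (x, x + w))) k p).trans ?_
    have := (hΦ k hk).2 0 w p.1
    simpa using this

theorem bd3 (v : Eu d) (hGb : ∀ k ≤ n, ∀ x, ‖iteratedFDeriv ℝ k g x‖ ≤ G) (hc : 0 < c₂)
    (hΦ : KB Φ a n c₁ c₂) (hΨ : KB Ψ b n c₁ c₂) :
    Bd (fun (x : Eu d) w => g (x + w)) (fun x w => Ψ (x + w) (x + v))
      (fun x w => Φ x (x + w)) b a (fun _ => v) n c₂ G c₁ c₁ := by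
  refine ⟨hc, fun x w k hk => ⟨gb hGb w k hk x, (hΨ k hk).2 w v x, ?_⟩⟩
  have := (hΦ k hk).2 0 w x
  simpa using this

theorem convG0_eq1 (P₁ P₂ : ℝ → Eu d → Eu d → ℝ) (s t : ℝ) (x y : Eu d) :
    convG0 g P₁ P₂ s t x y =
      ∫ w, g (y + w) * (P₁ s x (y + w) * P₂ (t - s) (y + w) y) :=
  (integral_add_left_eq_self (fun z => g z * (P₁ s x z * P₂ (t - s) z y)) y).symm

theorem convG0_eq2 (P₁ P₂ : ℝ → Eu d → Eu d → ℝ) (s t : ℝ) (x y : Eu d) :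
    convG0 g P₁ P₂ s t x y =
      ∫ w, g (x + w) * (P₂ (t - s) (x + w) y * P₁ s x (x + w)) := by
  rw [convG0, ← integral_add_left_eq_self _ x]
  congr 1; ext w
  rw [mul_comm (P₁ _ _ _)]

theorem half_pow {t a : ℝ} (ht : 0 < t) (ha : t / 2 ≤ a) (n : ℕ) :
    a ^ (-(n : ℝ) / 2) ≤ 2 ^ ((n : ℝ) / 2) * t ^ (-(n : ℝ) / 2) := by
  have h : (0:ℝ) ≤ n := Nat.cast_nonneg n
  refine (rpow_le_rpow_of_nonpos (by positivity) ha (by linarith)).trans (le_of_eq ?_)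
  rw [div_rpow ht.le (by norm_num), neg_div, rpow_neg (by norm_num : (0:ℝ) ≤ 2)]
  field_simp

end final

/-- Proposition 5 (ii): if `B₁, B₂` are bounded subsets of `𝒢(ℝ^d)` and `g ∈ C_b^∞(ℝ^d)`,
then `{π₁ *_{g,0} π₂ | π₁ ∈ B₁, π₂ ∈ B₂}` is a bounded subset of `𝓗(ℝ^d)`. -/
theorem statement1 (d : ℕ) (hd : 1 ≤ d)
    (g : Eu d → ℝ) (hg : ContDiff ℝ (⊤ : ℕ∞) g)
    (hgb : ∀ γ : Fin d → ℕ, ∃ C : ℝ, ∀ x, |pderivM γ g x| ≤ C)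
    (B₁ B₂ : Set (ℝ → Eu d → Eu d → ℝ))
    -- the members of `B₁ ∪ B₂` are measurable in `(t,x,y)`
    (hmeas : ∀ P ∈ B₁ ∪ B₂, Measurable fun p : ℝ × Eu d × Eu d => P p.1 p.2.1 p.2.2)
    -- and infinitely differentiable in `(x,y)` for every `t ∈ (0,1]`
    (hsmooth : ∀ P ∈ B₁ ∪ B₂, ∀ t ∈ Set.Ioc (0:ℝ) 1,
      ContDiff ℝ (⊤ : ℕ∞) fun p : Eu d × Eu d => P t p.1 p.2)
    -- `B₁` and `B₂` are bounded subsets of `𝒢(ℝ^d)`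
    (hG : ∀ α β : Fin d → ℕ, ∃ c₁ ≥ (0:ℝ), ∃ c₂ > (0:ℝ), ∀ P ∈ B₁ ∪ B₂,
      ∀ t ∈ Set.Ioc (0:ℝ) 1, ∀ x y : Eu d,
        |D2 α β (P t) x y| ≤ c₁ * t ^ (-((mlen α + mlen β + d : ℕ) : ℝ) / 2) *
            Real.exp (-c₂ * ‖x - y‖ ^ 2 / t) ∧
        |pderivM α (fun x' => P t x' (x' + Real.sqrt t • y)) x| ≤
          c₁ * t ^ (-(d : ℝ) / 2) * Real.exp (-c₂ * ‖y‖ ^ 2)) :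
    -- conclusion: the convolutions form a bounded subset of `𝓗(ℝ^d)`
    (∀ P₁ ∈ B₁, ∀ P₂ ∈ B₂, ∀ s t : ℝ, 0 < s → s < t → t ≤ 1 →
      ContDiff ℝ (⊤ : ℕ∞) fun p : Eu d × Eu d => convG0 g P₁ P₂ s t p.1 p.2) ∧
    (∀ α β : Fin d → ℕ, ∃ c₁ ≥ (0:ℝ), ∃ c₂ > (0:ℝ), ∀ P₁ ∈ B₁, ∀ P₂ ∈ B₂,
      ∀ s t : ℝ, 0 < s → s < t → t ≤ 1 → ∀ x y : Eu d,
        |D2 α β (convG0 g P₁ P₂ s t) x y| ≤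
          c₁ * t ^ (-((mlen α + mlen β + d : ℕ) : ℝ) / 2) *
            Real.exp (-c₂ * ‖x - y‖ ^ 2 / t) ∧
        |pderivM α (fun x' => convG0 g P₁ P₂ s t x' (x' + Real.sqrt t • y)) x| ≤
          c₁ * t ^ (-(d : ℝ) / 2) * Real.exp (-c₂ * ‖y‖ ^ 2)) := by
  have hB := keyB (B₁ ∪ B₂) hsmooth hG
  have hgk := keyg hg hgb
  have ex : ∀ P₁ ∈ B₁, ∀ P₂ ∈ B₂, ∀ s t : ℝ, 0 < s → s < t → t ≤ 1 →
      (s ∈ Set.Ioc (0:ℝ) 1 ∧ t - s ∈ Set.Ioc (0:ℝ) 1) ∧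
      (ContDiff ℝ ∞ fun p : Eu d × Eu d => P₁ s p.1 p.2) ∧
      (ContDiff ℝ ∞ fun p : Eu d × Eu d => P₂ (t - s) p.1 p.2) := by
    intro P₁ h1 P₂ h2 s t hs hst ht
    have i1 : s ∈ Set.Ioc (0:ℝ) 1 := ⟨hs, by linarith⟩
    have i2 : t - s ∈ Set.Ioc (0:ℝ) 1 := ⟨by linarith, by linarith⟩
    exact ⟨⟨i1, i2⟩, hsmooth P₁ (Or.inl h1) s i1, hsmooth P₂ (Or.inr h2) _ i2⟩
  have M1 : ∀ P₁ ∈ B₁, ∀ P₂ ∈ B₂, ∀ s t : ℝ, 0 < s → s < t → t ≤ 1 → _ :=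
    fun P₁ h1 P₂ h2 s t hs hst ht =>
    have e := ex P₁ h1 P₂ h2 s t hs hst ht
    master (E := Eu d × Eu d) (f₁ := fun p w => g (p.2 + w)) (f₂ := fun p w => P₁ s p.1 (p.2 + w))
      (f₃ := fun p w => P₂ (t - s) (p.2 + w) p.2) (U := fun p => p.1 - p.2) e.1.1.1 e.1.2.1
      (hg.comp (by fun_prop))
      (e.2.1.comp (by fun_prop : ContDiff ℝ ∞
        fun q : (Eu d × Eu d) × Eu d => (q.1.1, q.1.2 + q.2)))
      (e.2.2.comp (by fun_prop : ContDiff ℝ ∞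
        fun q : (Eu d × Eu d) × Eu d => (q.1.2 + q.2, q.1.2)))
      (fun n => by
        obtain ⟨c₁, _, c₂, hc₂, h⟩ := hB n
        obtain ⟨G, _, hG'⟩ := hgk n
        exact ⟨_, _, _, _, bd1 hg e.2.2 hG' hc₂ (h P₁ (Or.inl h1) s e.1.1)
          (h P₂ (Or.inr h2) _ e.1.2)⟩)
  have M2 : ∀ P₁ ∈ B₁, ∀ P₂ ∈ B₂, ∀ s t : ℝ, 0 < s → s < t → t ≤ 1 → _ :=
    fun P₁ h1 P₂ h2 s t hs hst ht =>
    have e := ex P₁ h1 P₂ h2 s t hs hst ht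
    master (E := Eu d × Eu d) (f₁ := fun p w => g (p.1 + w))
      (f₂ := fun p w => P₂ (t - s) (p.1 + w) p.2)
      (f₃ := fun p w => P₁ s p.1 (p.1 + w)) (U := fun p => p.2 - p.1) e.1.2.1 e.1.1.1
      (hg.comp (by fun_prop))
      (e.2.2.comp (by fun_prop : ContDiff ℝ ∞
        fun q : (Eu d × Eu d) × Eu d => (q.1.1 + q.2, q.1.2)))
      (e.2.1.comp (by fun_prop : ContDiff ℝ ∞
        fun q : (Eu d × Eu d) × Eu d => (q.1.1, q.1.1 + q.2)))
      (fun n => by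
        obtain ⟨c₁, _, c₂, hc₂, h⟩ := hB n
        obtain ⟨G, _, hG'⟩ := hgk n
        exact ⟨_, _, _, _, bd2 hg e.2.1 hG' hc₂ (h P₁ (Or.inl h1) s e.1.1)
          (h P₂ (Or.inr h2) _ e.1.2)⟩)
  have M3 : ∀ P₁ ∈ B₁, ∀ P₂ ∈ B₂, ∀ s t : ℝ, 0 < s → s < t → t ≤ 1 → ∀ v : Eu d, _ :=
    fun P₁ h1 P₂ h2 s t hs hst ht v =>
    have e := ex P₁ h1 P₂ h2 s t hs hst ht
    master (E := Eu d) (f₁ := fun x w => g (x + w))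
      (f₂ := fun x w => P₂ (t - s) (x + w) (x + v))
      (f₃ := fun x w => P₁ s x (x + w)) (U := fun _ => v) e.1.2.1 e.1.1.1
      (hg.comp (by fun_prop))
      (e.2.2.comp (by fun_prop : ContDiff ℝ ∞
        fun q : Eu d × Eu d => (q.1 + q.2, q.1 + v)))
      (e.2.1.comp (by fun_prop : ContDiff ℝ ∞
        fun q : Eu d × Eu d => (q.1, q.1 + q.2)))
      (fun n => by
        obtain ⟨c₁, _, c₂, hc₂, h⟩ := hB n
        obtain ⟨G, _, hG'⟩ := hgk n
        exact ⟨_, _, _, _, bd3 v hG' hc₂ (h P₁ (Or.inl h1) s e.1.1)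
          (h P₂ (Or.inr h2) _ e.1.2)⟩)
  have E1 : ∀ P₁ P₂ : ℝ → Eu d → Eu d → ℝ, ∀ s t : ℝ,
      (fun p : Eu d × Eu d => convG0 g P₁ P₂ s t p.1 p.2) = fun p =>
      ∫ w, g (p.2 + w) * (P₁ s p.1 (p.2 + w) * P₂ (t - s) (p.2 + w) p.2) :=
    fun P₁ P₂ s t => funext fun p => convG0_eq1 P₁ P₂ s t p.1 p.2
  have E2 : ∀ P₁ P₂ : ℝ → Eu d → Eu d → ℝ, ∀ s t : ℝ,
      (fun p : Eu d × Eu d => convG0 g P₁ P₂ s t p.1 p.2) = fun p =>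
      ∫ w, g (p.1 + w) * (P₂ (t - s) (p.1 + w) p.2 * P₁ s p.1 (p.1 + w)) :=
    fun P₁ P₂ s t => funext fun p => convG0_eq2 P₁ P₂ s t p.1 p.2
  have E3 : ∀ P₁ P₂ : ℝ → Eu d → Eu d → ℝ, ∀ s t : ℝ, ∀ v : Eu d,
      (fun x : Eu d => convG0 g P₁ P₂ s t x (x + v)) = fun x =>
      ∫ w, g (x + w) * (P₂ (t - s) (x + w) (x + v) * P₁ s x (x + w)) :=
    fun P₁ P₂ s t v => funext fun x => convG0_eq2 P₁ P₂ s t x (x + v)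
  have smooth : ∀ P₁ ∈ B₁, ∀ P₂ ∈ B₂, ∀ s t : ℝ, 0 < s → s < t → t ≤ 1 →
      ContDiff ℝ (⊤ : ℕ∞) fun p : Eu d × Eu d => convG0 g P₁ P₂ s t p.1 p.2 := by
    intro P₁ h1 P₂ h2 s t hs hst ht
    rw [E1]
    exact (M1 P₁ h1 P₂ h2 s t hs hst ht).1
  refine ⟨smooth, fun α β => ?_⟩
  obtain ⟨a₁, ha₁, a₂, ha₂, hA⟩ := hB (mlen α + mlen β)
  obtain ⟨G, hG0, hGb⟩ := hgk (mlen α + mlen β)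
  obtain ⟨b₁, hb₁, b₂, hb₂, hC⟩ := hB (mlen α)
  obtain ⟨G', hG0', hGb'⟩ := hgk (mlen α)
  set n := mlen α + mlen β with hn
  set m := mlen α with hm
  set X := 2 ^ n * (2 ^ n * (G * (a₁ * 2 ^ ((n:ℝ)/2) * a₁))) * (π / a₂) ^ ((d:ℝ)/2) with hX
  set Y := 2 ^ m * (2 ^ m * (G' * (b₁ * b₁))) * (π / b₂) ^ ((d:ℝ)/2) with hY
  have hX0 : 0 ≤ X := by positivity
  have hY0 : 0 ≤ Y := by positivity
  refine ⟨X + Y, by positivity, min a₂ b₂, lt_min ha₂ hb₂, ?_⟩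
  intro P₁ h1 P₂ h2 s t hs hst ht x y
  have ht0 : 0 < t := hs.trans hst
  have e := ex P₁ h1 P₂ h2 s t hs hst ht
  constructor
  · refine (D2_le α β (smooth P₁ h1 P₂ h2 s t hs hst ht) x y).trans ?_
    -- common final estimate
    have fin : ∀ q, 0 < q → t / 2 ≤ q → ∀ r : ℝ, r = ‖x - y‖ →
        2 ^ n * (2 ^ n * (G * (a₁ * q ^ (-(n:ℝ)/2) * a₁))) * ((π / a₂) ^ ((d:ℝ)/2) *
          (t ^ (-(d:ℝ)/2) * exp (-a₂ * r ^ 2 / t))) ≤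
        (X + Y) * t ^ (-((n + d : ℕ) : ℝ) / 2) * exp (-(min a₂ b₂) * ‖x - y‖ ^ 2 / t) := by
      intro q hq0 hq r hr
      subst hr
      calc _ ≤ 2 ^ n * (2 ^ n * (G * (a₁ * (2 ^ ((n : ℝ) / 2) * t ^ (-(n : ℝ) / 2)) * a₁))) *
            ((π / a₂) ^ ((d:ℝ)/2) * (t ^ (-(d:ℝ)/2) * exp (-(min a₂ b₂) * ‖x - y‖ ^ 2 / t))) := by
            gcongr
            · exact half_pow ht0 hq n
            · exact min_le_left _ _
        _ = X * (t ^ (-(n : ℝ) / 2) * t ^ (-(d:ℝ)/2)) *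
            exp (-(min a₂ b₂) * ‖x - y‖ ^ 2 / t) := by rw [hX]; ring
        _ = X * t ^ (-((n + d : ℕ) : ℝ) / 2) * exp (-(min a₂ b₂) * ‖x - y‖ ^ 2 / t) := by
            rw [← rpow_add ht0]; congr 3; push_cast; ring
        _ ≤ _ := by gcongr; linarith
    by_cases hc : t / 2 ≤ s
    · rw [E1]
      refine ((M1 P₁ h1 P₂ h2 s t hs hst ht).2 n _ _ _ _ (bd1 hg e.2.2 hGb ha₂
        (hA P₁ (Or.inl h1) s e.1.1) (hA P₂ (Or.inr h2) _ e.1.2)) (x, y)).trans ?_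
      rw [add_sub_cancel]
      exact fin s hs hc _ rfl
    · rw [E2]
      refine ((M2 P₁ h1 P₂ h2 s t hs hst ht).2 n _ _ _ _ (bd2 hg e.2.1 hGb ha₂
        (hA P₁ (Or.inl h1) s e.1.1) (hA P₂ (Or.inr h2) _ e.1.2)) (x, y)).trans ?_
      rw [sub_add_cancel]
      exact fin (t - s) (by linarith) (by linarith) _ (norm_sub_rev _ _)
  · have sm : ContDiff ℝ ∞ fun x' => convG0 g P₁ P₂ s t x' (x' + √t • y) :=
      (smooth P₁ h1 P₂ h2 s t hs hst ht).comp
        (by fun_prop : ContDiff ℝ ∞ fun x' : Eu d => (x', x' + √t • y))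
    refine (pderivM_le α sm x).trans ?_
    rw [E3]
    refine ((M3 P₁ h1 P₂ h2 s t hs hst ht (√t • y)).2 m _ _ _ _ (bd3 _ hGb' hb₂
        (hC P₁ (Or.inl h1) s e.1.1) (hC P₂ (Or.inr h2) _ e.1.2)) x).trans ?_
    have hny : -b₂ * ‖√t • y‖ ^ 2 / t = -b₂ * ‖y‖ ^ 2 := by
      rw [norm_smul, mul_pow, Real.norm_eq_abs, sq_abs, sq_sqrt ht0.le]
      field_simp
    rw [sub_add_cancel, hny]
    calc _ = Y * t ^ (-(d:ℝ)/2) * exp (-b₂ * ‖y‖ ^ 2) := by rw [hY]; ring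
      _ ≤ _ := by
        gcongr
        · linarith
        · exact min_le_right _ _
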